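/- arXiv:0908.0577 — 2 statements merged into one kernel-verified Lean document; each statement's English description precedes it below -/
import Mathlib

section
/- For every δ with 0 < δ < 1 there exist smooth (C^∞) 2π-periodic functions u, v : ℝ → ℝ such that 1 + u″(x)/4 > 0, 1 + v″(x)/4 > 0, and (1 + u″(x)/4)·(1 + v″(x)/4) = δ for every x ∈ ℝ. -/
open Real

/-!
A smooth periodic function of mean zero is the second derivative of a smooth periodic function, so
the functions `1 + u″/4` with `u` smooth and periodic are exactly the smooth periodic functions of
mean `1`. It remains to factor `δ` into two positive ones. With `s = √(1 - δ²)`, the function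
`f = 1 - s cos` is positive of mean `1`, and by the Poisson integral formula `1 / f` has mean
`1 / √(1 - s²) = 1 / δ`, so that `f` and `δ / f` will do.
-/

open MeasureTheory Metric
open scoped ContDiff

section PeriodicPrimitive

variable {E : Type*} [NormedAddCommGroup E] [NormedSpace ℝ E] {f : ℝ → E} {T : ℝ}

theorem periodic_integral_of_integral_period_eq_zero (hf : Function.Periodic f T)
    (hint : ∀ a b, IntervalIntegrable f volume a b) {a : ℝ} (h0 : ∫ t in a..a + T, f t = 0) :
    Function.Periodic (fun x => ∫ t in a..x, f t) T := fun x => by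
  simp only [hf.intervalIntegral_add_eq_add a x hint, h0, add_zero]

variable [CompleteSpace E]

theorem contDiff_integral_right {n : ℕ∞} (hf : ContDiff ℝ n f) (a : ℝ) :
    ContDiff ℝ (n + 1) fun x => ∫ t in a..x, f t := by
  have hderiv : deriv (fun x => ∫ t in a..x, f t) = f :=
    funext fun x => hf.continuous.deriv_integral f a x
  have hdiff : Differentiable ℝ fun x => ∫ t in a..x, f t := fun x =>
    (hf.continuous.integral_hasStrictDerivAt a x).hasDerivAt.differentiableAt
  exact contDiff_succ_iff_deriv.2 ⟨hdiff, by simp, by rwa [hderiv]⟩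

theorem exists_periodic_deriv_eq_of_integral_eq_zero {n : ℕ∞} (hf : ContDiff ℝ n f)
    (hper : Function.Periodic f T) (h0 : ∫ t in 0..T, f t = 0) :
    ∃ F : ℝ → E, Function.Periodic F T ∧ ContDiff ℝ (n + 1) F ∧ deriv F = f ∧
      ∫ t in 0..T, F t = 0 := by
  let G : ℝ → E := fun x => ∫ t in 0..x, f t
  have hG : ContDiff ℝ (n + 1) G := contDiff_integral_right hf 0
  have hGper : Function.Periodic G T :=
    periodic_integral_of_integral_period_eq_zero hper hf.continuous.intervalIntegrable
      (by rwa [zero_add])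
  let m : E := T⁻¹ • ∫ t in 0..T, G t
  refine ⟨fun x => G x - m, fun x => by simp only [hGper x], hG.sub contDiff_const, ?_, ?_⟩
  · funext x
    rw [deriv_sub_const, hf.continuous.deriv_integral f 0 x]
  · obtain rfl | hT := eq_or_ne T 0
    · exact intervalIntegral.integral_same
    rw [intervalIntegral.integral_sub (hG.continuous.intervalIntegrable 0 T)
      intervalIntegrable_const, intervalIntegral.integral_const, sub_zero, smul_inv_smul₀ hT,
      sub_self]

theorem exists_periodic_deriv_deriv_eq_of_integral_eq_zero {n : ℕ∞} (hf : ContDiff ℝ n f)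
    (hper : Function.Periodic f T) (h0 : ∫ t in 0..T, f t = 0) :
    ∃ u : ℝ → E, Function.Periodic u T ∧ ContDiff ℝ (n + 2) u ∧ deriv (deriv u) = f := by
  obtain ⟨F, hFper, hF, hF', hF0⟩ := exists_periodic_deriv_eq_of_integral_eq_zero hf hper h0
  obtain ⟨u, huper, hu, hu', -⟩ :=
    exists_periodic_deriv_eq_of_integral_eq_zero (n := n + 1) (mod_cast hF) hFper hF0
  refine ⟨u, huper, ?_, by rw [hu', hF']⟩
  rw [← one_add_one_eq_two, ← add_assoc]
  exact mod_cast hu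

end PeriodicPrimitive

theorem exists_periodic_one_add_deriv_deriv_div_four_eq {f : ℝ → ℝ} {T : ℝ} {n : ℕ∞}
    (hf : ContDiff ℝ n f) (hper : Function.Periodic f T) (hmean : ∫ t in 0..T, f t = T) :
    ∃ u : ℝ → ℝ, Function.Periodic u T ∧ ContDiff ℝ (n + 2) u ∧
      ∀ x, 1 + deriv (deriv u) x / 4 = f x := by
  have h0 : ∫ t in 0..T, 4 * (f t - 1) = 0 := by
    rw [intervalIntegral.integral_const_mul, intervalIntegral.integral_sub
      (hf.continuous.intervalIntegrable 0 T) intervalIntegrable_const, hmean]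
    simp
  obtain ⟨u, huper, hu, hu''⟩ := exists_periodic_deriv_deriv_eq_of_integral_eq_zero
    (contDiff_const.mul (hf.sub contDiff_const)) (fun x => by simp only [hper x]) h0
  refine ⟨u, huper, hu, fun x => ?_⟩
  rw [hu'']
  ring

theorem exists_periodic_pair_mul_eq_of_integral_eq {f : ℝ → ℝ} {T δ : ℝ} {n : ℕ∞}
    (hf : ContDiff ℝ n f) (hper : Function.Periodic f T) (hpos : ∀ x, 0 < f x)
    (hmean : ∫ t in 0..T, f t = T) (hinv_mean : δ * ∫ t in 0..T, (f t)⁻¹ = T)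
    (hδ : 0 < δ) :
    ∃ u v : ℝ → ℝ,
      Function.Periodic u T ∧ ContDiff ℝ (n + 2) u ∧
      Function.Periodic v T ∧ ContDiff ℝ (n + 2) v ∧
      ∀ x, 0 < 1 + deriv (deriv u) x / 4 ∧ 0 < 1 + deriv (deriv v) x / 4 ∧
        (1 + deriv (deriv u) x / 4) * (1 + deriv (deriv v) x / 4) = δ := by
  let g : ℝ → ℝ := fun x => δ * (f x)⁻¹
  have hg : ContDiff ℝ n g := contDiff_const.mul (hf.inv fun x => (hpos x).ne')
  have hgper : Function.Periodic g T := fun x => by simp only [g, hper x]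
  have hgmean : ∫ t in 0..T, g t = T := by rwa [intervalIntegral.integral_const_mul]
  obtain ⟨u, huper, hu, hu''⟩ :=
    exists_periodic_one_add_deriv_deriv_div_four_eq hf hper hmean
  obtain ⟨v, hvper, hv, hv''⟩ :=
    exists_periodic_one_add_deriv_deriv_div_four_eq hg hgper hgmean
  refine ⟨u, v, huper, hu, hvper, hv, fun x => ?_⟩
  rw [hu'' x, hv'' x]
  exact ⟨hpos x, mul_pos hδ (inv_pos.2 (hpos x)), by
    rw [mul_left_comm, mul_inv_cancel₀ (hpos x).ne', mul_one]⟩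

theorem sub_mul_cos_pos {a b : ℝ} (h : |b| < a) (θ : ℝ) : 0 < a - b * cos θ := by
  have : b * cos θ ≤ |b| := calc
    b * cos θ ≤ |b| * |cos θ| := (le_abs_self _).trans_eq (abs_mul _ _)
    _ ≤ |b| := mul_le_of_le_one_right (abs_nonneg b) (abs_cos_le_one θ)
  linarith

theorem circleAverage_poissonKernel {c w : ℂ} {R : ℝ} (hw : w ∈ ball c R) :
    circleAverage (poissonKernel c w) c R = 1 := by
  simpa only [smul_eq_mul, mul_one, Pi.one_apply] using
    InnerProductSpace.HarmonicOnNhd.circleAverage_poissonKernel_smul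
      (f := (1 : ℂ → ℝ)) (InnerProductSpace.harmonicOnNhd_const 1) hw

theorem norm_circleMap_zero_sub_ofReal_sq (R r θ : ℝ) :
    ‖circleMap 0 R θ - r‖ ^ 2 = R ^ 2 + r ^ 2 - 2 * (R * r) * cos θ := by
  rw [← Complex.normSq_eq_norm_sq, Complex.normSq_apply]
  simp only [circleMap_zero, Complex.sub_re, Complex.mul_re, Complex.ofReal_re,
    Complex.exp_ofReal_mul_I_re, Complex.ofReal_im, Complex.exp_ofReal_mul_I_im, zero_mul, sub_zero,
    Complex.sub_im, Complex.mul_im, add_zero]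
  linear_combination R ^ 2 * sin_sq_add_cos_sq θ

theorem integral_poissonKernel_ofReal {R r : ℝ} (h : |r| < R) :
    ∫ θ in 0..2 * π, (R ^ 2 - r ^ 2) / (R ^ 2 + r ^ 2 - 2 * (R * r) * cos θ) = 2 * π := by
  have havg := circleAverage_poissonKernel (c := 0) (w := r) (R := R) (by simpa using h)
  rw [circleAverage_def, smul_eq_mul, inv_mul_eq_one₀ two_pi_pos.ne'] at havg
  simpa [poissonKernel_def, norm_circleMap_zero_sub_ofReal_sq] using havg.symm

theorem integral_inv_sub_mul_cos {a b : ℝ} (h : |b| < a) :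
    ∫ θ in 0..2 * π, (a - b * cos θ)⁻¹ = 2 * π / √(a ^ 2 - b ^ 2) := by
  have ha : 0 < a := (abs_nonneg b).trans_lt h
  have hdisc : 0 < a ^ 2 - b ^ 2 := sub_pos.2 (sq_lt_sq.2 (by rwa [abs_of_pos ha]))
  set c := √(a ^ 2 - b ^ 2)
  have hc : 0 < c := sqrt_pos.2 hdisc
  have hcsq : c ^ 2 = a ^ 2 - b ^ 2 := sq_sqrt hdisc.le
  -- The radii with `R * r = b`, `R ^ 2 + r ^ 2 = 2 * a` and `R ^ 2 - r ^ 2 = 2 * c`.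
  set R := √(a + c)
  set r := b / R
  have hR : 0 < R := sqrt_pos.2 (add_pos ha hc)
  have hRsq : R ^ 2 = a + c := sq_sqrt (add_pos ha hc).le
  have hRr : R * r = b := mul_div_cancel₀ b hR.ne'
  have hrsq : r ^ 2 = a - c := by
    rw [div_pow, hRsq, div_eq_iff (add_pos ha hc).ne']
    linear_combination hcsq
  have hrR : |r| < R := abs_lt_of_sq_lt_sq (by linarith) hR.le
  have hkernel (θ : ℝ) : (R ^ 2 - r ^ 2) / (R ^ 2 + r ^ 2 - 2 * (R * r) * cos θ) =
      c * (a - b * cos θ)⁻¹ := by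
    rw [hRsq, hrsq, hRr, show a + c - (a - c) = 2 * c by ring,
      show a + c + (a - c) - 2 * b * cos θ = 2 * (a - b * cos θ) by ring,
      mul_div_mul_left _ _ two_ne_zero, div_eq_mul_inv]
  have hpoisson := integral_poissonKernel_ofReal hrR
  simp only [hkernel, intervalIntegral.integral_const_mul] at hpoisson
  rw [eq_div_iff hc.ne', mul_comm, hpoisson]

/-- For every `0 < δ < 1` there exist smooth `2π`-periodic functions
`u, v : ℝ → ℝ` with `1 + u″/4 > 0`, `1 + v″/4 > 0`, and
`(1 + u″/4)(1 + v″/4) = δ` everywhere. -/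
theorem exists_smooth_periodic_pair_solution
    (δ : ℝ) (hδ0 : 0 < δ) (hδ1 : δ < 1) :
    ∃ u v : ℝ → ℝ,
      Function.Periodic u (2 * π) ∧ ContDiff ℝ (⊤ : ℕ∞) u ∧
      Function.Periodic v (2 * π) ∧ ContDiff ℝ (⊤ : ℕ∞) v ∧
      ∀ x : ℝ, 0 < 1 + deriv (deriv u) x / 4 ∧ 0 < 1 + deriv (deriv v) x / 4 ∧
        (1 + deriv (deriv u) x / 4) * (1 + deriv (deriv v) x / 4) = δ := by
  have hs : √(1 - δ ^ 2) ^ 2 = 1 - δ ^ 2 := sq_sqrt (by nlinarith)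
  set s := √(1 - δ ^ 2)
  have hs1 : |s| < 1 := (sq_lt_one_iff_abs_lt_one s).1 (by nlinarith)
  have hmean : ∫ x in 0..2 * π, (1 - s * cos x) = 2 * π := by simp
  have hinv_mean : δ * ∫ x in 0..2 * π, (1 - s * cos x)⁻¹ = 2 * π := by
    rw [integral_inv_sub_mul_cos hs1, one_pow, hs, sub_sub_cancel, sqrt_sq hδ0.le,
      mul_div_cancel₀ _ hδ0.ne']
  exact exists_periodic_pair_mul_eq_of_integral_eq (n := ⊤)
    (contDiff_const.sub (contDiff_const.mul contDiff_cos))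
    (fun x => by simp only [cos_add_two_pi])
    (sub_mul_cos_pos hs1) hmean hinv_mean hδ0
end

section
/- Let n ≥ 1, let (Ω, μ) be a measure space with 0 < μ(Ω) < ∞, and let H : Ω → Matrix (Fin n) (Fin n) ℂ be a matrix-valued function whose entries are integrable, such that: (i) H(x) is Hermitian for μ-a.e. x; (ii) I + H(x) is positive definite for μ-a.e. x; (iii) there is a real constant c ≥ 1 with det(I + H(x)) = c for μ-a.e. x; and (iv) the trace has zero mean, ∫_Ω trace H(x) dμ(x) = 0. Then c = 1 and H(x) = 0 for μ-a.e. x. -/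
open MeasureTheory
open scoped ComplexOrder

/-!
Applying `log t ≤ t - 1` to the eigenvalues of `1 + H` gives `log det (1 + H) ≤ tr H`, with equality
only for `H = 0`. If `det (1 + H) ≥ 1`, then `tr H ≥ 0`, so a mean value of `tr H` that is at most
zero forces `tr H = 0`, and hence equality, almost everywhere.
-/

lemma log_eq_sub_one_iff {t : ℝ} (ht : 0 < t) : Real.log t = t - 1 ↔ t = 1 := by
  refine ⟨fun h => ?_, fun h => by simp [h]⟩
  by_contra hne
  exact (Real.log_lt_sub_one_of_pos ht hne).ne h

section Matrix

variable {𝕜 ι : Type*} [RCLike 𝕜] [Fintype ι] [DecidableEq ι] {A H : Matrix ι ι 𝕜}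

lemma eq_one_of_eigenvalues_eq_one (hA : A.IsHermitian) (h : hA.eigenvalues = 1) : A = 1 := by
  have hspec := hA.spectral_theorem
  rwa [h, Pi.comp_one, RCLike.ofReal_one, Function.const_one, Matrix.diagonal_one',
    map_one] at hspec

lemma re_trace_sub_card_eq_sum_eigenvalues_sub_one (hA : A.IsHermitian) :
    RCLike.re A.trace - Fintype.card ι = ∑ i, (hA.eigenvalues i - 1) := by
  simp [hA.trace_eq_sum_eigenvalues]

lemma log_re_det_eq_sum_log_eigenvalues (hA : A.PosDef) :
    Real.log (RCLike.re A.det) = ∑ i, Real.log (hA.isHermitian.eigenvalues i) := by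
  rw [hA.isHermitian.det_eq_prod_eigenvalues, ← RCLike.ofReal_prod, RCLike.ofReal_re,
    Real.log_prod fun i _ => (hA.eigenvalues_pos i).ne']

lemma log_re_det_le_re_trace_sub_card (hA : A.PosDef) :
    Real.log (RCLike.re A.det) ≤ RCLike.re A.trace - Fintype.card ι := by
  rw [log_re_det_eq_sum_log_eigenvalues hA,
    re_trace_sub_card_eq_sum_eigenvalues_sub_one hA.isHermitian]
  exact Finset.sum_le_sum fun i _ => Real.log_le_sub_one_of_pos (hA.eigenvalues_pos i)

lemma eq_one_of_log_re_det_eq_re_trace_sub_card (hA : A.PosDef)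
    (h : Real.log (RCLike.re A.det) = RCLike.re A.trace - Fintype.card ι) : A = 1 := by
  rw [log_re_det_eq_sum_log_eigenvalues hA,
    re_trace_sub_card_eq_sum_eigenvalues_sub_one hA.isHermitian,
    Finset.sum_eq_sum_iff_of_le fun i _ => Real.log_le_sub_one_of_pos (hA.eigenvalues_pos i)] at h
  refine eq_one_of_eigenvalues_eq_one hA.isHermitian (funext fun i => ?_)
  exact (log_eq_sub_one_iff (hA.eigenvalues_pos i)).1 (h i (Finset.mem_univ i))

lemma log_re_det_one_add_le_re_trace (hH : (1 + H).PosDef) :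
    Real.log (RCLike.re (1 + H).det) ≤ RCLike.re H.trace := by
  simpa [Matrix.trace_add] using log_re_det_le_re_trace_sub_card hH

lemma eq_zero_of_log_re_det_one_add_eq_re_trace (hH : (1 + H).PosDef)
    (h : Real.log (RCLike.re (1 + H).det) = RCLike.re H.trace) : H = 0 := by
  have hone : 1 + H = 1 :=
    eq_one_of_log_re_det_eq_re_trace_sub_card hH (by simpa [Matrix.trace_add] using h)
  simpa using hone

lemma posDef_of_posSemidef_of_one_le_det (hA : A.PosSemidef) (hdet : 1 ≤ A.det) : A.PosDef :=
  hA.posDef_iff_det_ne_zero.2 (zero_lt_one.trans_le hdet).ne'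

lemma log_re_det_nonneg_of_one_le_det (hdet : 1 ≤ A.det) :
    0 ≤ Real.log (RCLike.re A.det) :=
  Real.log_nonneg (by simpa using (RCLike.le_iff_re_im.1 hdet).1)

lemma re_trace_nonneg_of_one_le_det_one_add (hH : (1 + H).PosSemidef)
    (hdet : 1 ≤ (1 + H).det) : 0 ≤ RCLike.re H.trace :=
  (log_re_det_nonneg_of_one_le_det hdet).trans
    (log_re_det_one_add_le_re_trace (posDef_of_posSemidef_of_one_le_det hH hdet))

lemma eq_zero_of_one_le_det_one_add_of_re_trace_eq_zero (hH : (1 + H).PosSemidef)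
    (hdet : 1 ≤ (1 + H).det) (htrace : RCLike.re H.trace = 0) : H = 0 := by
  have hpos := posDef_of_posSemidef_of_one_le_det hH hdet
  refine eq_zero_of_log_re_det_one_add_eq_re_trace hpos
    ((log_re_det_one_add_le_re_trace hpos).antisymm ?_)
  exact htrace.trans_le (log_re_det_nonneg_of_one_le_det hdet)

end Matrix

section Measure

lemma integrable_trace {ι Ω E : Type*} [Fintype ι] [MeasurableSpace Ω] [NormedAddCommGroup E]
    {μ : Measure Ω} {H : Ω → Matrix ι ι E} (hH : ∀ i, Integrable (fun x => H x i i) μ) :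
    Integrable (fun x => (H x).trace) μ :=
  integrable_finsetSum _ fun i _ => hH i

variable {𝕜 ι Ω : Type*} [RCLike 𝕜] [Fintype ι] [DecidableEq ι] [MeasurableSpace Ω]
  {μ : Measure Ω} {H : Ω → Matrix ι ι 𝕜}

lemma ae_eq_zero_of_one_le_det_one_add_of_re_integral_trace_nonpos
    (hint : Integrable (fun x => (H x).trace) μ)
    (hpos : ∀ᵐ x ∂μ, (1 + H x).PosSemidef)
    (hdet : ∀ᵐ x ∂μ, 1 ≤ (1 + H x).det)
    (htrace : RCLike.re (∫ x, (H x).trace ∂μ) ≤ 0) :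
    ∀ᵐ x ∂μ, H x = 0 := by
  have hnonneg : 0 ≤ᵐ[μ] fun x => RCLike.re (H x).trace := by
    filter_upwards [hpos, hdet] with x hx hx_det
    exact re_trace_nonneg_of_one_le_det_one_add hx hx_det
  have hmean : ∫ x, RCLike.re (H x).trace ∂μ = 0 :=
    ((integral_re hint).trans_le htrace).antisymm (integral_nonneg_of_ae hnonneg)
  have htrace_zero : (fun x => RCLike.re (H x).trace) =ᵐ[μ] 0 :=
    (integral_eq_zero_iff_of_nonneg_ae hnonneg hint.re).1 hmean
  filter_upwards [hpos, hdet, htrace_zero] with x hx hx_det hx_trace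
  exact eq_zero_of_one_le_det_one_add_of_re_trace_eq_zero hx hx_det hx_trace

theorem ae_eq_zero_of_det_one_add_eq_const_of_trace_mean_zero_general [NeZero μ]
    (hint : Integrable (fun x => (H x).trace) μ)
    (hpos : ∀ᵐ x ∂μ, (1 + H x).PosSemidef)
    {c : ℝ} (hc : 1 ≤ c)
    (hdet : ∀ᵐ x ∂μ, (c : 𝕜) ≤ (1 + H x).det)
    (htrace : RCLike.re (∫ x, (H x).trace ∂μ) ≤ 0) :
    c = 1 ∧ ∀ᵐ x ∂μ, H x = 0 := by
  have hone_le : (1 : 𝕜) ≤ c := by exact_mod_cast hc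
  have hzero : ∀ᵐ x ∂μ, H x = 0 :=
    ae_eq_zero_of_one_le_det_one_add_of_re_integral_trace_nonpos hint hpos
      (hdet.mono fun _ => hone_le.trans) htrace
  obtain ⟨x, hx_det, hx⟩ := (hdet.and hzero).exists
  have hc_le : (c : 𝕜) ≤ 1 := by simpa only [hx, add_zero, Matrix.det_one] using hx_det
  exact ⟨le_antisymm (by exact_mod_cast hc_le) hc, hzero⟩

end Measure

/-- If `H` is an a.e.-Hermitian integrable matrix-valued function on a finite
measure space with `I + H` a.e. positive definite, `det (I + H) = c` a.e. for a
constant `c ≥ 1`, and `∫ trace H dμ = 0`, then `c = 1` and `H = 0` a.e. -/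
theorem ae_eq_zero_of_det_one_add_eq_const_of_trace_mean_zero
    {Ω : Type*} [MeasurableSpace Ω] (μ : Measure Ω)
    (hμ0 : 0 < μ Set.univ) (hμfin : μ Set.univ < ⊤)
    (n : ℕ) (hn : 1 ≤ n)
    (H : Ω → Matrix (Fin n) (Fin n) ℂ)
    (hint : ∀ i j : Fin n, Integrable (fun x => H x i j) μ)
    (hherm : ∀ᵐ x ∂μ, (H x).IsHermitian)
    (hpos : ∀ᵐ x ∂μ, (1 + H x).PosDef)
    (c : ℝ) (hc : 1 ≤ c)
    (hdet : ∀ᵐ x ∂μ, (1 + H x).det = (c : ℂ))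
    (htrace : ∫ x, (H x).trace ∂μ = 0) :
    c = 1 ∧ ∀ᵐ x ∂μ, H x = 0 := by
  have : NeZero μ := ⟨Measure.measure_univ_pos.1 hμ0⟩
  exact ae_eq_zero_of_det_one_add_eq_const_of_trace_mean_zero_general
    (integrable_trace fun i => hint i i) (hpos.mono fun _ hx => hx.posSemidef) hc
    (hdet.mono fun _ hx => hx.ge) (by simp [htrace])
end
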